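/- arXiv:1407.5754 — 2 statements merged into one kernel-verified Lean document; each statement's English description precedes it below -/
import Mathlib

section
/- (Proposition 2, consistency with the global optimum) Let V be a finite set of sites, 𝓔 a set of edges on V, L a finite nonempty set of labels, with singleton energies E_i, pairwise energies E_{ij}, total energy E, subset τ ⊆ V, and conditional energy E_τ. Let x^map : V → L be a global minimizer of E, i.e., E(x^map) ≤ E(x) for every labeling x. Let x̂ : V → L be a labeling that agrees with x^map on V \ τ and minimizes E_τ among all labelings agreeing with x^map on V \ τ. Then x̂ is also a global minimizer of E, i.e., E(x̂) = E(x^map). -/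
open Finset

/-! The sites outside `τ` and the edges disjoint from `τ` account for the whole difference between
the total and the conditional energy. Their contribution is constant on the labelings that agree
with a given one outside `τ`, so on these labelings both energies induce the same order. -/

section Energy

variable {V M : Type*} {L : V → Type*} [DecidableEq V] [AddCommMonoid M]

/-- The total energy of a labeling `x`, with singleton energies `Es` and pairwise energies `Ep` on
the edges `𝓔`. Label sets may depend on the site, and energies may take values in any additive
commutative monoid. -/
def totalEnergy [Fintype V] (𝓔 : Finset (V × V)) (Es : ∀ i, L i → M)
    (Ep : ∀ i j, L i → L j → M) (x : ∀ i, L i) : M :=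
  ∑ i, Es i (x i) + ∑ e ∈ 𝓔, Ep e.1 e.2 (x e.1) (x e.2)

/-- The conditional energy of a labeling `x` relative to `τ`: the energy of the sites in `τ`, of the
edges inside `τ` and of the edges with exactly one endpoint in `τ`. -/
def conditionalEnergy (𝓔 : Finset (V × V)) (Es : ∀ i, L i → M)
    (Ep : ∀ i j, L i → L j → M) (τ : Finset V) (x : ∀ i, L i) : M :=
  ∑ i ∈ τ, Es i (x i)
    + ∑ e ∈ 𝓔.filter (fun e => e.1 ∈ τ ∧ e.2 ∈ τ), Ep e.1 e.2 (x e.1) (x e.2)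
    + ∑ e ∈ 𝓔.filter (fun e => (e.1 ∈ τ ∧ e.2 ∉ τ) ∨ (e.1 ∉ τ ∧ e.2 ∈ τ)),
        Ep e.1 e.2 (x e.1) (x e.2)

/-- The energy of a labeling `x` outside `τ`, carried by the sites not in `τ` and the edges with no
endpoint in `τ`; it is what the conditional energy omits from the total energy. -/
def exteriorEnergy [Fintype V] (𝓔 : Finset (V × V)) (Es : ∀ i, L i → M)
    (Ep : ∀ i j, L i → L j → M) (τ : Finset V) (x : ∀ i, L i) : M :=
  ∑ i ∈ τᶜ, Es i (x i)
    + ∑ e ∈ 𝓔.filter (fun e => e.1 ∉ τ ∧ e.2 ∉ τ), Ep e.1 e.2 (x e.1) (x e.2)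

theorem sum_filter_and_add_sum_filter_xor_add_sum_filter_nor {ι : Type*} (s : Finset ι)
    (p q : ι → Prop) [DecidablePred p] [DecidablePred q] (f : ι → M) :
    ∑ i ∈ s.filter (fun i => p i ∧ q i), f i
      + ∑ i ∈ s.filter (fun i => (p i ∧ ¬q i) ∨ (¬p i ∧ q i)), f i
      + ∑ i ∈ s.filter (fun i => ¬p i ∧ ¬q i), f i = ∑ i ∈ s, f i := by
  simp only [sum_filter, ← sum_add_distrib]
  refine sum_congr rfl fun i _ => ?_
  by_cases hp : p i <;> by_cases hq : q i <;> simp [hp, hq]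

variable [Fintype V] (𝓔 : Finset (V × V)) (Es : ∀ i, L i → M) (Ep : ∀ i j, L i → L j → M)
  {τ : Finset V} {x y : ∀ i, L i}

theorem conditionalEnergy_add_exteriorEnergy (τ : Finset V) (x : ∀ i, L i) :
    conditionalEnergy 𝓔 Es Ep τ x + exteriorEnergy 𝓔 Es Ep τ x = totalEnergy 𝓔 Es Ep x := by
  rw [totalEnergy, ← sum_add_sum_compl τ,
    ← sum_filter_and_add_sum_filter_xor_add_sum_filter_nor 𝓔 (·.1 ∈ τ) (·.2 ∈ τ),
    conditionalEnergy, exteriorEnergy]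
  abel

theorem exteriorEnergy_congr (hxy : ∀ i ∉ τ, x i = y i) :
    exteriorEnergy 𝓔 Es Ep τ x = exteriorEnergy 𝓔 Es Ep τ y := by
  unfold exteriorEnergy
  congr 1
  · refine sum_congr rfl fun i hi => ?_
    rw [hxy i (mem_compl.mp hi)]
  · refine sum_congr rfl fun e he => ?_
    obtain ⟨h₁, h₂⟩ := (mem_filter.mp he).2
    rw [hxy e.1 h₁, hxy e.2 h₂]

variable [PartialOrder M] [IsOrderedCancelAddMonoid M]

theorem totalEnergy_le_iff_conditionalEnergy_le (hxy : ∀ i ∉ τ, x i = y i) :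
    totalEnergy 𝓔 Es Ep x ≤ totalEnergy 𝓔 Es Ep y ↔
      conditionalEnergy 𝓔 Es Ep τ x ≤ conditionalEnergy 𝓔 Es Ep τ y := by
  rw [← conditionalEnergy_add_exteriorEnergy 𝓔 Es Ep τ x,
    ← conditionalEnergy_add_exteriorEnergy 𝓔 Es Ep τ y,
    exteriorEnergy_congr 𝓔 Es Ep hxy, add_le_add_iff_right]

theorem conditional_tree_update_global_min_general {xmap xhat : ∀ i, L i}
    (hmap : ∀ x, totalEnergy 𝓔 Es Ep xmap ≤ totalEnergy 𝓔 Es Ep x)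
    (hagree : ∀ i ∉ τ, xhat i = xmap i)
    (hle : conditionalEnergy 𝓔 Es Ep τ xhat ≤ conditionalEnergy 𝓔 Es Ep τ xmap) :
    totalEnergy 𝓔 Es Ep xhat = totalEnergy 𝓔 Es Ep xmap :=
  le_antisymm ((totalEnergy_le_iff_conditionalEnergy_le 𝓔 Es Ep hagree).mpr hle) (hmap xhat)

end Energy

/-- Proposition 2: if `xmap` is a global minimizer of the total energy `E`
and `xhat` agrees with `xmap` outside `τ` while minimizing the conditional tree energy
`Eτ` among all such labelings, then `xhat` is also a global minimizer of `E`. -/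
theorem conditional_tree_update_global_min
    (V L : Type*) [Fintype V] [DecidableEq V] [Fintype L] [Nonempty L]
    (𝓔 : Finset (V × V)) (hNoLoop : ∀ e ∈ 𝓔, e.1 ≠ e.2)
    (Es : V → L → ℝ) (Ep : V → V → L → L → ℝ)
    (τ : Finset V)
    (E : (V → L) → ℝ)
    (hE : ∀ x : V → L,
      E x = ∑ i, Es i (x i) + ∑ e ∈ 𝓔, Ep e.1 e.2 (x e.1) (x e.2))
    (Eτ : (V → L) → ℝ)
    (hEτ : ∀ x : V → L,
      Eτ x = ∑ i ∈ τ, Es i (x i)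
        + ∑ e ∈ 𝓔.filter (fun e => e.1 ∈ τ ∧ e.2 ∈ τ), Ep e.1 e.2 (x e.1) (x e.2)
        + ∑ e ∈ 𝓔.filter (fun e => (e.1 ∈ τ ∧ e.2 ∉ τ) ∨ (e.1 ∉ τ ∧ e.2 ∈ τ)),
            Ep e.1 e.2 (x e.1) (x e.2))
    (xmap : V → L)
    (hmap : ∀ x : V → L, E xmap ≤ E x)
    (xhat : V → L)
    (hagree : ∀ i, i ∉ τ → xhat i = xmap i)
    (hmin : ∀ y : V → L, (∀ i, i ∉ τ → y i = xmap i) → Eτ xhat ≤ Eτ y) :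
    E xhat = E xmap := by
  obtain rfl : E = totalEnergy 𝓔 Es Ep := funext hE
  obtain rfl : Eτ = conditionalEnergy 𝓔 Es Ep τ := funext hEτ
  exact conditional_tree_update_global_min_general 𝓔 Es Ep hmap hagree (hmin xmap fun _ _ => rfl)
end

section
/- (Markov property: the conditional distribution of a tree depends only on its Markov blanket) Let V be a finite set of sites, 𝓔 a set of edges on V, L a finite nonempty set of labels, with singleton energies E_i, pairwise energies E_{ij}, total energy E, and Gibbs probability P(x) = exp(−E(x))/Z. Let τ ⊆ V and let N(τ) be the Markov blanket of τ, i.e., the set of sites j ∉ τ such that some edge of 𝓔 joins j to a site of τ. For a labeling x : V → L and z : τ → L, write x[z] for the labeling equal to z on τ and to x on V \ τ. If two labelings x and x' agree on N(τ), then for every z : τ → L, P(x[z]) / (Σ_{z' : τ → L} P(x[z'])) = P(x'[z]) / (Σ_{z' : τ → L} P(x'[z'])); that is, the conditional distribution of the labels on τ given the labels outside τ depends on the outside labels only through their values on N(τ). -/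
open Finset

/-!
A Gibbs weight is the product of the factors `exp (-φ t)` of its interaction terms. Resampling the
sites of `τ` leaves the factors whose scope misses `τ` unchanged, so they cancel in the conditional
distribution, along with the normalizer. The remaining factors see only `τ`, which has just been
overwritten, and the Markov blanket of `τ`.
-/

section Conditional

variable {V 𝕜 : Type*} {L : V → Type*} [DecidableEq V] [∀ i, Fintype (L i)] [Semifield 𝕜]
  {P Q : (∀ i, L i) → 𝕜} {τ : Finset V} {s : Set V}

/-- The conditional distribution under the weight `P` of the labels on `τ`, given that the labels
off `τ` are those of `x`, evaluated at `z`. The weight need not be normalized; the values of `x`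
on `τ` are overwritten. -/
def conditional (P : (∀ i, L i) → 𝕜) (τ : Finset V) (x : ∀ i, L i) (z : ∀ i : τ, L i) : 𝕜 :=
  P (Function.updateFinset x τ z) / ∑ z', P (Function.updateFinset x τ z')

theorem dependsOn_conditional (hP : DependsOn P s) (z : ∀ i : τ, L i) :
    DependsOn (fun x ↦ conditional P τ x z) (s \ τ) := by
  intro x y hxy
  have hP_eq (w : ∀ i : τ, L i) :
      P (Function.updateFinset x τ w) = P (Function.updateFinset y τ w) :=
    hP.updateFinset w hxy
  simp only [conditional, hP_eq]

theorem conditional_mul_of_dependsOn_compl (hQ : DependsOn Q (τ : Set V)ᶜ) {x : ∀ i, L i}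
    (hQx : Q x ≠ 0) (z : ∀ i : τ, L i) : conditional (Q * P) τ x z = conditional P τ x z := by
  have hQ_eq (w : ∀ i : τ, L i) : Q (Function.updateFinset x τ w) = Q x :=
    hQ fun _ hi ↦ dif_neg hi
  simp only [conditional, Pi.mul_apply, hQ_eq, ← mul_sum, mul_div_mul_left _ _ hQx]

theorem dependsOn_conditional_mul (hQ : DependsOn Q (τ : Set V)ᶜ) (hQ_ne : ∀ x, Q x ≠ 0)
    (hP : DependsOn P s) (z : ∀ i : τ, L i) :
    DependsOn (fun x ↦ conditional (Q * P) τ x z) (s \ τ) := by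
  simpa only [conditional_mul_of_dependsOn_compl hQ (hQ_ne _)] using dependsOn_conditional hP z

end Conditional

section Gibbs

variable {Ω : Type*} [Fintype Ω]

/-- The Gibbs distribution of the energy `E`, as a probability mass function. -/
noncomputable def gibbs (E : Ω → ℝ) (ω : Ω) : ℝ :=
  Real.exp (-E ω) / ∑ ω', Real.exp (-E ω')

theorem gibbs_add (E F : Ω → ℝ) :
    gibbs (E + F) =
      (fun ω ↦ Real.exp (-E ω) / ∑ ω', Real.exp (-(E + F) ω')) * fun ω ↦ Real.exp (-F ω) := by
  funext ω
  simp only [gibbs, Pi.mul_apply, Pi.add_apply, neg_add, Real.exp_add, div_mul_eq_mul_div]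

theorem sum_exp_ne_zero [Nonempty Ω] (f : Ω → ℝ) : ∑ ω, Real.exp (f ω) ≠ 0 :=
  (sum_pos (fun ω _ ↦ Real.exp_pos (f ω)) univ_nonempty).ne'

end Gibbs

section Interaction

variable {V ι : Type*} {L : V → Type*}

theorem dependsOn_sum {M : Type*} [AddCommMonoid M] {φ : ι → (∀ i, L i) → M} {T : Finset ι}
    {s : Set V} (hφ : ∀ t ∈ T, DependsOn (φ t) s) : DependsOn (∑ t ∈ T, φ t) s := by
  intro x y hxy
  simp only [Finset.sum_apply]
  exact sum_congr rfl fun t ht ↦ hφ t ht hxy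

/-- The Markov blanket of `τ` for interaction terms indexed by `t : ι`, the `t`-th of which involves
the sites in `scope t`: the sites outside `τ` that share a term with a site of `τ`. -/
def markovBlanket (scope : ι → Set V) (τ : Set V) : Set V :=
  (⋃ (t) (_ : ¬Disjoint (scope t) τ), scope t) \ τ

theorem markov_property_conditional_tree_general [Fintype V] [DecidableEq V] [Fintype ι]
    [∀ i, Fintype (L i)] {scope : ι → Set V} {φ : ι → (∀ i, L i) → ℝ}
    (hφ : ∀ t, DependsOn (φ t) (scope t)) (τ : Finset V) (z : ∀ i : τ, L i) :
    DependsOn (fun x ↦ conditional (gibbs (∑ t, φ t)) τ x z) (markovBlanket scope τ) := by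
  classical
  let outer := ∑ t with Disjoint (scope t) τ, φ t
  let inner := ∑ t with ¬Disjoint (scope t) τ, φ t
  have h_split : outer + inner = ∑ t, φ t := sum_filter_add_sum_filter_not _ _ _
  have h_outer : DependsOn outer (τ : Set V)ᶜ := dependsOn_sum fun t ht ↦
    (hφ t).mono (mem_filter.1 ht).2.subset_compl_right
  have h_inner : DependsOn inner (⋃ (t) (_ : ¬Disjoint (scope t) τ), scope t) :=
    dependsOn_sum fun t ht ↦ (hφ t).mono (Set.subset_iUnion₂_of_subset t (mem_filter.1 ht).2 le_rfl)
  intro x y hxy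
  have : Nonempty (∀ i, L i) := ⟨x⟩
  rw [← h_split, gibbs_add]
  exact dependsOn_conditional_mul (fun _ _ h ↦ by rw [h_outer h])
    (fun _ ↦ div_ne_zero (Real.exp_ne_zero _) (sum_exp_ne_zero _))
    (fun _ _ h ↦ by rw [h_inner h]) z hxy

end Interaction

section Pairwise

variable {V M : Type*} {L : V → Type*}

/-- The sites involved in each term of a pairwise energy with edge set `𝓔`: the terms are indexed by
`V ⊕ 𝓔`, one for each site and one for each edge. -/
def pairwiseScope (𝓔 : Finset (V × V)) : V ⊕ 𝓔 → Set V :=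
  Sum.elim (fun i ↦ {i}) (fun e ↦ {e.1.1, e.1.2})

/-- The terms of the pairwise energy with singleton energies `Es` and edge energies `Ep`, indexed as
in `pairwiseScope`. -/
def pairwiseTerm (𝓔 : Finset (V × V)) (Es : ∀ i, L i → M) (Ep : ∀ i j, L i → L j → M) :
    V ⊕ 𝓔 → (∀ i, L i) → M :=
  Sum.elim (fun i x ↦ Es i (x i)) (fun e x ↦ Ep e.1.1 e.1.2 (x e.1.1) (x e.1.2))

variable (𝓔 : Finset (V × V)) (Es : ∀ i, L i → M) (Ep : ∀ i j, L i → L j → M)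

theorem dependsOn_pairwiseTerm (t : V ⊕ 𝓔) :
    DependsOn (pairwiseTerm 𝓔 Es Ep t) (pairwiseScope 𝓔 t) := by
  intro x y hxy
  cases t <;> simp_all [pairwiseTerm, pairwiseScope]

theorem sum_pairwiseTerm_apply [Fintype V] [AddCommMonoid M] (x : ∀ i, L i) :
    (∑ t, pairwiseTerm 𝓔 Es Ep t) x =
      ∑ i, Es i (x i) + ∑ e ∈ 𝓔, Ep e.1 e.2 (x e.1) (x e.2) := by
  simp only [Finset.sum_apply, Fintype.sum_sum_type, pairwiseTerm, Sum.elim_inl, Sum.elim_inr]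
  rw [sum_coe_sort 𝓔 fun e ↦ Ep e.1 e.2 (x e.1) (x e.2)]

theorem mem_markovBlanket_pairwiseScope {τ : Set V} {j : V} :
    j ∈ markovBlanket (pairwiseScope 𝓔) τ ↔ j ∉ τ ∧ ∃ i ∈ τ, (i, j) ∈ 𝓔 ∨ (j, i) ∈ 𝓔 := by
  simp only [markovBlanket, Set.mem_sdiff, Set.mem_iUnion, exists_prop, Sum.exists, pairwiseScope,
    Sum.elim_inl, Sum.elim_inr, Set.not_disjoint_iff, Set.mem_singleton_iff, Set.mem_insert_iff,
    Subtype.exists, Prod.exists]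
  grind

end Pairwise

/-- Markov property: the conditional Gibbs distribution of the labels on a
subset `τ`, given the labels outside `τ`, depends on the outside labels only through
their values on the Markov blanket `N(τ)` of `τ` (the sites outside `τ` joined by an
edge of `𝓔` to some site of `τ`). Here `patch x z` denotes the labeling equal to `z`
on `τ` and to `x` off `τ`. -/
theorem markov_property_conditional_tree
    (V L : Type*) [Fintype V] [DecidableEq V] [Fintype L] [Nonempty L]
    (𝓔 : Finset (V × V)) (hNoLoop : ∀ e ∈ 𝓔, e.1 ≠ e.2)
    (Es : V → L → ℝ) (Ep : V → V → L → L → ℝ)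
    (τ : Finset V)
    (E : (V → L) → ℝ)
    (hE : ∀ x : V → L,
      E x = ∑ i, Es i (x i) + ∑ e ∈ 𝓔, Ep e.1 e.2 (x e.1) (x e.2))
    (Z : ℝ)
    (hZ : Z = ∑ x' : V → L, Real.exp (-(E x')))
    (P : (V → L) → ℝ)
    (hP : ∀ x : V → L, P x = Real.exp (-(E x)) / Z)
    (patch : (V → L) → (↥τ → L) → (V → L))
    (hpatch : ∀ (x : V → L) (z : ↥τ → L) (i : V),
      patch x z i = if h : i ∈ τ then z ⟨i, h⟩ else x i)
    (x x' : V → L)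
    (hblanket : ∀ j : V, j ∉ τ →
      (∃ i ∈ τ, (i, j) ∈ 𝓔 ∨ (j, i) ∈ 𝓔) → x j = x' j) :
    ∀ z : ↥τ → L,
      P (patch x z) / (∑ z' : ↥τ → L, P (patch x z'))
        = P (patch x' z) / (∑ z' : ↥τ → L, P (patch x' z')) := by
  intro z
  have h_patch : patch = (Function.updateFinset · τ) := funext fun x ↦ funext₂ (hpatch x)
  have h_gibbs : P = gibbs (∑ t, pairwiseTerm 𝓔 Es Ep t) := by
    funext x
    simp only [hP, hZ, hE, gibbs, sum_pairwiseTerm_apply]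
  rw [h_patch, h_gibbs]
  exact markov_property_conditional_tree_general (dependsOn_pairwiseTerm 𝓔 Es Ep) τ z fun j hj ↦
    (mem_markovBlanket_pairwiseScope 𝓔).1 hj |>.elim (hblanket j)
end
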